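/- arXiv:2512.16597 — 2 statements merged into one kernel-verified Lean document; each statement's English description precedes it below -/
import Mathlib

section
/- Let K = ℚ(√7) and let E be the elliptic curve over K given by y² = x³ − 4x² − 12x = x(x + 2)(x − 6). Then E(K) contains a point of infinite order; that is, n = 2 is a properly (ℚ(√7), 2π/3)-congruent number. Moreover, the elements u = 3√7/7, v = 8√7/3, w = 61√7/21 of K satisfy w² = u² + v² + uv and uv = 8, so (u, v, w) is a (ℚ(√7), 2π/3)-triangle of area 2√3. -/
open IntermediateField

/-!
A triangle `(u, v, w)` with angle `θ` and area parameter `n` gives the point with `x = (w / 2)²` on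
`E_{n,θ}`, because `x + (r + s)n = ((u + v) / 2)²` and `x - (r - s)n = ((u - v) / 2)²`.

Let `ν` be a valuation with `ν 2 < 1`. On an integral model `y² = x³ + a₂x² + a₄x + a₆` the leading
terms dominate the duplication formula as soon as `ν x > 1`, so that `ν (x(2P)) = ν (x(P)) / ν 4`.
Hence `ν ∘ x` grows strictly along `P, 2P, 4P, …`, and `P` has infinite order. For the triangle over
`ℚ(√7)` the number `w = 61√7/21` is a `2`-adic unit, so `ν x = 1 / ν 4 > 1`.
-/

section InfiniteOrder

theorem not_isOfFinAddOrder_of_lt_nsmul {M α : Type*} [AddMonoid M] [Preorder α] {f : M → α}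
    {c : α} {m : ℕ} (hf : ∀ P, c < f P → f P < f (m • P)) {P : M} (hP : c < f P) :
    ¬ IsOfFinAddOrder P := by
  intro hfin
  have hfinite : {Q ∈ (AddSubmonoid.multiples P : Set M) | c < f Q}.Finite :=
    hfin.finite_multiples.subset fun _ hQ => hQ.1
  obtain ⟨Q, ⟨hQ, hcQ⟩, hmax⟩ :=
    hfinite.exists_maximalFor f _ ⟨P, AddSubmonoid.mem_multiples P, hP⟩
  have hlt : f Q < f (m • Q) := hf Q hcQ
  exact hlt.not_ge (hmax ⟨nsmul_mem hQ m, hcQ.trans hlt⟩ hlt.le)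

end InfiniteOrder

section Valuation

open Polynomial

theorem exists_valuationSubring_natCast_lt_one (F : Type*) [Field F] [CharZero F] {p : ℕ}
    (hp : p ≠ 1) : ∃ B : ValuationSubring F, B.valuation p < 1 := by
  let A : Subring F := (Int.castRingHom F).range
  let q : A := ⟨p, p, by simp⟩
  have hq : ¬ IsUnit q := by
    rintro ⟨⟨_, ⟨_, m, rfl⟩, h, -⟩, rfl⟩
    have hF : (p : F) * m = 1 := congrArg Subtype.val h
    have hpm : (p : ℤ) * m = 1 := by exact_mod_cast hF
    exact hp (by simpa using Int.isUnit_iff_natAbs_eq.1 (.of_mul_eq_one m hpm))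
  obtain ⟨B, -, hB⟩ := (Ideal.span {q}).image_subset_nonunits_valuationSubring
    (by rwa [Ne, Ideal.span_singleton_eq_top])
  exact ⟨B, B.mem_nonunits_iff.1 (hB ⟨q, Ideal.mem_span_singleton_self q, rfl⟩)⟩

variable {F Γ₀ : Type*} [Field F] [LinearOrderedCommGroupWithZero Γ₀] (ν : Valuation F Γ₀)

theorem valuation_natCast_eq_one_of_coprime {p m : ℕ} (hp : ν p < 1) (h : p.Coprime m) :
    ν m = 1 := by
  have hint (k : ℤ) : ν k ≤ 1 := (ν.mem_integer_iff _).1 (intCast_mem ν.integer k)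
  obtain ⟨a, b, hab⟩ := Nat.isCoprime_iff_coprime.2 h
  have hab' : (a * p + b * m : F) = 1 := by exact_mod_cast congrArg (Int.cast (R := F)) hab
  refine le_antisymm (mod_cast hint m) (not_lt.1 fun hm => ?_)
  have hlt : ν (a * p + b * m) < 1 := by
    refine ν.map_add_lt ?_ ?_
    · rw [map_mul]
      exact (mul_le_of_le_one_left' (hint a)).trans_lt hp
    · rw [map_mul]
      exact (mul_le_of_le_one_left' (hint b)).trans_lt hm
  rw [hab', map_one] at hlt
  exact lt_irrefl 1 hlt

theorem valuation_aeval_of_monic {p : ν.integer[X]} (hp : p.Monic) {x : F} (hx : 1 < ν x) :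
    ν (aeval x p) = ν x ^ p.natDegree := by
  rw [aeval_eq_sum_range, Finset.sum_range_succ, hp.coeff_natDegree, one_smul, ← map_pow]
  refine ν.map_add_eq_of_lt_right (ν.map_sum_lt' ?_ fun i hi => ?_)
  · rw [map_pow]
    exact pow_pos (zero_lt_one.trans hx) _
  · calc ν (p.coeff i • x ^ i) = ν (p.coeff i) * ν x ^ i := by
          rw [Subring.smul_def, smul_eq_mul, map_mul, map_pow]
      _ ≤ ν x ^ i := mul_le_of_le_one_left' (p.coeff i).2
      _ < ν x ^ p.natDegree := pow_lt_pow_right₀ hx (Finset.mem_range.1 hi)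
      _ = ν (x ^ p.natDegree) := (map_pow _ _ _).symm

end Valuation

section Duplication

open Polynomial WeierstrassCurve

variable {F : Type*} [Field F] (W : Affine F)

theorem eval_Ψ₂Sq_of_equation {x y : F} (h : W.Equation x y) :
    W.Ψ₂Sq.eval x = (y - W.negY x y) ^ 2 := by
  rw [Affine.equation_iff] at h
  simp only [Ψ₂Sq, Affine.negY, b₂, b₄, b₆, eval_add, eval_mul, eval_pow, eval_C, eval_X]
  linear_combination -4 * h

theorem addX_slope_self_mul_eval_Ψ₂Sq [DecidableEq F] {x y : F} (h : W.Equation x y)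
    (hy : y ≠ W.negY x y) :
    W.addX x x (W.slope x x y y) * W.Ψ₂Sq.eval x = (W.Φ 2).eval x := by
  have hd : y - W.negY x y ≠ 0 := sub_ne_zero.2 hy
  rw [eval_Ψ₂Sq_of_equation W h, Affine.slope_of_Y_ne rfl hy, Affine.addX]
  field_simp
  rw [Affine.equation_iff] at h
  simp only [Φ_two, Affine.negY, b₄, b₆, b₈, eval_sub, eval_mul, eval_pow, eval_C, eval_X]
  linear_combination -(W.a₁ ^ 2 + 4 * W.a₂ + 8 * x) * h

end Duplication

section IntegralModel

open Polynomial WeierstrassCurve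

variable {F Γ₀ : Type*} [Field F] [LinearOrderedCommGroupWithZero Γ₀] (ν : Valuation F Γ₀)
  (W : Affine F) [hW : W.IsIntegral ν.integer]

include hW

theorem valuation_eval_Φ (m : ℤ) {x : F} (hx : 1 < ν x) :
    ν ((W.Φ m).eval x) = ν x ^ m.natAbs ^ 2 := by
  obtain ⟨W₀, rfl⟩ := hW.integral
  rw [baseChange, map_Φ, eval_map_algebraMap,
    valuation_aeval_of_monic ν (W₀.leadingCoeff_Φ m) hx, natDegree_Φ]

variable [W.IsCharNeTwoNF]

theorem valuation_eval_Ψ₂Sq {x : F} (hx : 1 < ν x) : ν (W.Ψ₂Sq.eval x) = ν 4 * ν x ^ 3 := by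
  obtain ⟨W₀, rfl⟩ := hW.integral
  let c : Cubic ν.integer := ⟨1, W₀.a₂, W₀.a₄, W₀.a₆⟩
  have heval : (W₀.baseChange F).Ψ₂Sq.eval x = 4 * aeval x c.toPoly := by
    simp only [Ψ₂Sq, b₂_of_isCharNeTwoNF, b₄_of_isCharNeTwoNF, b₆_of_isCharNeTwoNF,
      Affine.baseChange_a₂, Affine.baseChange_a₄, Affine.baseChange_a₆, c, Cubic.toPoly, eval_add,
      eval_mul, eval_C, eval_pow, eval_X, map_mul, map_one, one_mul, map_add, map_pow, aeval_X,
      aeval_C]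
    ring
  rw [heval, map_mul, valuation_aeval_of_monic ν (Cubic.monic_of_a_eq_one rfl) hx,
    Cubic.natDegree_of_a_ne_zero' one_ne_zero]

variable [NeZero (2 : F)]

theorem Y_ne_negY_of_one_lt_valuation {x y : F} (h : W.Equation x y) (hx : 1 < ν x) :
    y ≠ W.negY x y := by
  intro hy
  have h₄ : (4 : F) ≠ 0 := by
    simpa only [two_mul, two_add_two_eq_four] using mul_self_ne_zero.2 (two_ne_zero' F)
  have hpos : ν 4 * ν x ^ 3 ≠ 0 :=
    mul_ne_zero (ν.ne_zero_iff.2 h₄) (pow_ne_zero 3 (zero_lt_one.trans hx).ne')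
  rw [← valuation_eval_Ψ₂Sq ν W hx, eval_Ψ₂Sq_of_equation W h, sub_eq_zero.2 hy] at hpos
  simp at hpos

theorem nonsingular_of_one_lt_valuation {x y : F} (h : W.Equation x y) (hx : 1 < ν x) :
    W.Nonsingular x y :=
  (W.nonsingular_iff x y).2 ⟨h, .inr (Y_ne_negY_of_one_lt_valuation ν W h hx)⟩

variable [DecidableEq F] {P : W.Point}

theorem valuation_four_mul_valuation_xRep_two_nsmul (hP : 1 < ν (P.xRep 0)) :
    ν 4 * ν ((2 • P).xRep 0) = ν (P.xRep 0) := by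
  cases P with
  -- `xRep` sends the point at infinity to `![1, 0]`, so that `hP` excludes it.
  | zero => simp [← Affine.Point.zero_def] at hP
  | some x y h =>
    have hx : 1 < ν x := by simpa using hP
    have hy := Y_ne_negY_of_one_lt_valuation ν W h.1 hx
    have hdup := congrArg ν (addX_slope_self_mul_eval_Ψ₂Sq W h.1 hy)
    rw [map_mul, valuation_eval_Ψ₂Sq ν W hx, valuation_eval_Φ ν W 2 hx] at hdup
    rw [two_nsmul, Affine.Point.add_self_of_Y_ne hy]
    simp only [Affine.Point.xRep_some, Matrix.cons_val_zero]
    refine mul_right_cancel₀ (pow_ne_zero 3 (zero_lt_one.trans hx).ne') ?_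
    calc ν 4 * ν (W.addX x x (W.slope x x y y)) * ν x ^ 3
        = ν (W.addX x x (W.slope x x y y)) * (ν 4 * ν x ^ 3) := by ac_rfl
      _ = ν x ^ 4 := hdup
      _ = ν x * ν x ^ 3 := pow_succ' _ _

theorem not_isOfFinAddOrder_of_one_lt_valuation (h₂ : ν 2 < 1) (hP : 1 < ν (P.xRep 0)) :
    ¬ IsOfFinAddOrder P := by
  have h₄ : ν 4 < 1 := by
    rw [← two_add_two_eq_four, ← two_mul, map_mul]
    exact mul_lt_one_of_lt_of_le h₂ h₂.le
  refine not_isOfFinAddOrder_of_lt_nsmul (f := fun Q : W.Point => ν (Q.xRep 0)) (c := 1) (m := 2)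
    (fun Q hQ => ?_) hP
  have hdouble := valuation_four_mul_valuation_xRep_two_nsmul ν W hQ
  have hpos : 0 < ν ((2 • Q).xRep 0) := by
    refine zero_lt_iff.2 fun h => ?_
    rw [h, mul_zero] at hdouble
    exact not_lt_zero (hdouble ▸ hQ)
  rw [← hdouble]
  exact mul_lt_of_lt_one_left hpos h₄

end IntegralModel

section ThetaCongruent

/-- The `θ`-congruent number curve `E_{n,θ} : y² = x (x + (r + s) n) (x - (r - s) n)`, where
`cos θ = s / r`. -/
def thetaCongruentCurve {R : Type*} [CommRing R] (r s n : R) : WeierstrassCurve R :=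
  { a₁ := 0, a₂ := 2 * s * n, a₃ := 0, a₄ := -(r ^ 2 - s ^ 2) * n ^ 2, a₆ := 0 }

/-- `u`, `v`, `w` are the sides of an `(F, θ)`-triangle for `n`, where `cos θ = s / r` and the angle
`θ` lies between `u` and `v`: the law of cosines holds and the area is `n √(r² - s²)`. Positivity of
the sides is not part of the notion, since `F` carries no order. -/
structure IsThetaTriangle {F : Type*} [Field F] (r s n u v w : F) : Prop where
  law_of_cosines : w ^ 2 = u ^ 2 + v ^ 2 - 2 * u * v * (s / r)
  mul_eq : u * v = 2 * r * n

instance {R : Type*} [CommRing R] (r s n : R) : (thetaCongruentCurve r s n).IsCharNeTwoNF :=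
  ⟨rfl, rfl⟩

variable {F : Type*} [Field F] {r s n u v w : F}

theorem isIntegral_thetaCongruentCurve {R : Type*} [CommRing R] [Algebra R F] (r s n : R) :
    (thetaCongruentCurve (algebraMap R F r) (algebraMap R F s) (algebraMap R F n)).IsIntegral R :=
  ⟨thetaCongruentCurve r s n, by
    simp [thetaCongruentCurve, WeierstrassCurve.baseChange, WeierstrassCurve.map, map_ofNat]⟩

theorem IsThetaTriangle.equation [NeZero (2 : F)] (h : IsThetaTriangle r s n u v w) (hr : r ≠ 0) :
    (thetaCongruentCurve r s n).toAffine.Equation ((w / 2) ^ 2)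
      (w / 2 * ((u + v) / 2) * ((u - v) / 2)) := by
  have h₂ : (2 : F) ≠ 0 := two_ne_zero
  have hlaw : w ^ 2 = u ^ 2 + v ^ 2 - 4 * s * n := by
    rw [h.law_of_cosines, mul_assoc 2 u v, h.mul_eq]
    field_simp
    ring
  have hadd : (w / 2) ^ 2 + (r + s) * n = ((u + v) / 2) ^ 2 := by
    field_simp
    linear_combination hlaw - 2 * h.mul_eq
  have hsub : (w / 2) ^ 2 - (r - s) * n = ((u - v) / 2) ^ 2 := by
    field_simp
    linear_combination hlaw + 2 * h.mul_eq
  rw [WeierstrassCurve.Affine.equation_iff]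
  simp only [thetaCongruentCurve]
  rw [mul_pow, mul_pow, ← hadd, ← hsub]
  ring

theorem IsThetaTriangle.exists_not_isOfFinAddOrder [DecidableEq F] [NeZero (2 : F)]
    {Γ₀ : Type*} [LinearOrderedCommGroupWithZero Γ₀] (ν : Valuation F Γ₀) (h₂ : ν 2 < 1)
    (h : IsThetaTriangle r s n u v w) (hr : r ≠ 0) (hνr : ν r ≤ 1) (hνs : ν s ≤ 1) (hνn : ν n ≤ 1)
    (hw : ν 2 < ν w) :
    ∃ P : (thetaCongruentCurve r s n).toAffine.Point, ¬ IsOfFinAddOrder P := by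
  have hint : (thetaCongruentCurve r s n).IsIntegral ν.integer :=
    isIntegral_thetaCongruentCurve (⟨r, hνr⟩ : ν.integer) ⟨s, hνs⟩ ⟨n, hνn⟩
  have hx : 1 < ν ((w / 2) ^ 2) := by
    rw [map_pow, map_div₀]
    exact one_lt_pow₀ ((one_lt_div₀ (ν.pos_iff.2 two_ne_zero)).2 hw) two_ne_zero
  have hP := nonsingular_of_one_lt_valuation ν _ (h.equation hr) hx
  exact ⟨.some _ _ hP, not_isOfFinAddOrder_of_one_lt_valuation ν _ h₂ (by simpa using hx)⟩

end ThetaCongruent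

section SqrtSeven

variable {F : Type*} [Field F] {σ : F}

theorem isThetaTriangle_of_sq_eq_seven [CharZero F] (hσ : σ ^ 2 = 7) :
    IsThetaTriangle 2 (-1) 2 (3 * σ / 7) (8 * σ / 3) (61 * σ / 21) where
  law_of_cosines := by
    linear_combination ((61 / 21) ^ 2 - (3 / 7) ^ 2 - (8 / 3) ^ 2 - 8 / 7) * hσ
  mul_eq := by linear_combination (8 / 7) * hσ

theorem valuation_sixtyOne_mul_div_twentyOne_eq_one {Γ₀ : Type*}
    [LinearOrderedCommGroupWithZero Γ₀] (ν : Valuation F Γ₀) (h₂ : ν 2 < 1) (hσ : σ ^ 2 = 7) :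
    ν (61 * σ / 21) = 1 := by
  have hodd {m : ℕ} (hm : Nat.Coprime 2 m) : ν m = 1 :=
    valuation_natCast_eq_one_of_coprime ν (mod_cast h₂) hm
  have h₇ : ν 7 = 1 := mod_cast hodd (m := 7) (by decide)
  have h₂₁ : ν 21 = 1 := mod_cast hodd (m := 21) (by decide)
  have h₆₁ : ν 61 = 1 := mod_cast hodd (m := 61) (by decide)
  have hνσ : ν σ = 1 := by
    rw [← pow_eq_one_iff_left two_ne_zero, ← map_pow, hσ, h₇]
  rw [map_div₀, map_mul, hνσ, h₆₁, h₂₁, mul_one, div_one]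

end SqrtSeven

theorem two_is_properly_congruent_over_sqrt_seven_general {F : Type*} [Field F] [CharZero F]
    [DecidableEq F] (W : WeierstrassCurve.Affine F)
    (hW : W = { a₁ := 0, a₂ := -4, a₃ := 0, a₄ := -12, a₆ := 0 })
    (σ : F) (hσ : σ ^ 2 = 7)
    (u v w : F) (hu : u = 3 * σ / 7) (hv : v = 8 * σ / 3) (hw : w = 61 * σ / 21) :
    (∃ P : W.Point, ¬ IsOfFinAddOrder P) ∧
      w ^ 2 = u ^ 2 + v ^ 2 + u * v ∧ u * v = 8 := by
  subst hu hv hw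
  have htriangle := isThetaTriangle_of_sq_eq_seven hσ
  obtain rfl : W = thetaCongruentCurve 2 (-1) 2 := by
    rw [hW, thetaCongruentCurve]
    norm_num
  obtain ⟨B, h₂⟩ := exists_valuationSubring_natCast_lt_one F (p := 2) (by decide)
  rw [Nat.cast_ofNat] at h₂
  refine ⟨htriangle.exists_not_isOfFinAddOrder B.valuation h₂ two_ne_zero h₂.le (by simp) h₂.le ?_,
    by linear_combination htriangle.law_of_cosines, by linear_combination htriangle.mul_eq⟩
  rwa [valuation_sixtyOne_mul_div_twentyOne_eq_one B.valuation h₂ hσ]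

/-- Over `K = ℚ(√7)`, the elliptic curve `E : y² = x³ − 4x² − 12x = x(x+2)(x−6)`
has a point of infinite order, i.e. `n = 2` is properly `(ℚ(√7), 2π/3)`-congruent; moreover the
elements `u = 3√7/7`, `v = 8√7/3`, `w = 61√7/21` of `K` satisfy `w² = u² + v² + uv` and `uv = 8`,
so `(u, v, w)` is a `(ℚ(√7), 2π/3)`-triangle of area `2√3`. -/
theorem two_is_properly_congruent_over_sqrt_seven
    (W : WeierstrassCurve.Affine ℚ⟮Real.sqrt 7⟯)
    (hW : W = { a₁ := 0, a₂ := -4, a₃ := 0, a₄ := -12, a₆ := 0 })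
    (σ : ℚ⟮Real.sqrt 7⟯) (hσ : (σ : ℝ) = Real.sqrt 7)
    (u v w : ℚ⟮Real.sqrt 7⟯)
    (hu : u = 3 * σ / 7) (hv : v = 8 * σ / 3) (hw : w = 61 * σ / 21) :
    (∃ P : W.Point, ¬ IsOfFinAddOrder P) ∧
      w ^ 2 = u ^ 2 + v ^ 2 + u * v ∧ u * v = 8 := by
  have hσ2 : σ ^ 2 = 7 := Subtype.ext <| by
    push_cast
    rw [hσ]
    exact Real.sq_sqrt (by norm_num)
  exact two_is_properly_congruent_over_sqrt_seven_general W hW σ hσ2 u v w hu hv hw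
end

section
/- Let K = ℚ(√5) and let E be the elliptic curve over K given by y² = x³ + 12x² − 108x = x(x + 18)(x − 6). Then E(K) contains a point of infinite order; that is, n = 6 is a properly (ℚ(√5), π/3)-congruent number. -/
open IntermediateField

/-!
In characteristic zero some valuation `v` satisfies `v 2 < 1`. On a `v`-integral curve
`y² = x³ + a₂x² + a₄x + a₆`, a point with `1 < v x` has `v (y²) = v x ^ 3`, so its tangent slope
`l = (3x² + 2a₂x + a₄) / (2y)` satisfies `v l ^ 2 = v x / v 4`. Since the double has abscissa
`l² - a₂ - 2x`, doubling multiplies `v x` by `(v 4)⁻¹ > 1`. The multiples `2ⁿ • P` are therefore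
pairwise distinct, and it remains to exhibit one point whose abscissa has an even denominator.
-/

lemma not_isOfFinAddOrder_of_lt_two_nsmul {A α : Type*} [AddMonoid A] [Preorder α] {f : A → α}
    {c : α} (hf : ∀ Q, c < f Q → f Q < f (2 • Q)) {P : A} (hP : c < f P) :
    ¬ IsOfFinAddOrder P := by
  intro hfin
  have succ_eq (n : ℕ) : 2 ^ (n + 1) • P = 2 • 2 ^ n • P := by rw [pow_succ, mul_nsmul]
  have lt_iterate (n : ℕ) : c < f (2 ^ n • P) := by
    induction n with
    | zero => simpa using hP
    | succ n ih => exact succ_eq n ▸ ih.trans (hf _ ih)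
  have strictMono : StrictMono fun n : ℕ ↦ f (2 ^ n • P) :=
    strictMono_nat_of_lt_succ fun n ↦ succ_eq n ▸ hf _ (lt_iterate n)
  have injective : Function.Injective fun n : ℕ ↦ 2 ^ n • P :=
    Function.Injective.of_comp (f := f) strictMono.injective
  refine Set.infinite_range_of_injective injective (hfin.finite_multiples.subset ?_)
  rintro _ ⟨n, rfl⟩
  exact ⟨2 ^ n, rfl⟩

lemma exists_valuationSubring_valuation_algebraMap_lt_one {A : Type*} (K : Type*) [CommRing A]
    [Field K] [Algebra A K] [FaithfulSMul A K] {a : A} (ha : ¬ IsUnit a) :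
    ∃ V : ValuationSubring K, V.valuation (algebraMap A K a) < 1 := by
  let e : A ≃+* (algebraMap A K).range :=
    .ofBijective (algebraMap A K).rangeRestrict
      ⟨(FaithfulSMul.algebraMap_injective A K).codRestrict Set.mem_range_self,
        (algebraMap A K).rangeRestrict_surjective⟩
  have span_ne_top : Ideal.span {e a} ≠ ⊤ := by
    rwa [Ne, Ideal.span_singleton_eq_top, MulEquiv.isUnit_map]
  obtain ⟨V, -, hV⟩ := Ideal.image_subset_nonunits_valuationSubring _ span_ne_top
  exact ⟨V, V.mem_nonunits_iff.1 (hV ⟨e a, Ideal.mem_span_singleton_self _, rfl⟩)⟩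

section Valuation

variable {R Γ₀ : Type*} [Ring R] [LinearOrderedCommGroupWithZero Γ₀] {v : Valuation R Γ₀}

lemma valuation_intCast_eq_one_of_odd (h2 : v 2 < 1) {n : ℤ} (hn : Odd n) : v n = 1 := by
  obtain ⟨m, rfl⟩ := hn
  have hm : v m ≤ 1 := intCast_mem v.integer m
  have even_lt : v (2 * m : R) < 1 := by
    rw [map_mul]
    exact mul_lt_one_of_lt_of_le h2 hm
  push_cast
  rw [add_comm, v.map_one_add_of_lt even_lt]

lemma valuation_linear_le {a b x : R} (ha : v a ≤ 1) (hb : v b ≤ 1) (hx : 1 ≤ v x) :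
    v (a * x + b) ≤ v x := by
  refine v.map_add_le ?_ (hb.trans hx)
  rw [map_mul]
  exact mul_le_of_le_one_left' ha

lemma valuation_quadratic_le {a b c x : R} (ha : v a ≤ 1) (hb : v b ≤ 1) (hc : v c ≤ 1)
    (hx : 1 ≤ v x) : v (a * x ^ 2 + b * x + c) ≤ v x ^ 2 := by
  rw [add_assoc]
  refine v.map_add_le ?_ ((valuation_linear_le hb hc hx).trans (le_self_pow hx two_ne_zero))
  rw [map_mul, map_pow]
  exact mul_le_of_le_one_left' ha

lemma valuation_quadratic_eq {a b c x : R} (ha : v a = 1) (hb : v b ≤ 1) (hc : v c ≤ 1)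
    (hx : 1 < v x) : v (a * x ^ 2 + b * x + c) = v x ^ 2 := by
  have leading : v (a * x ^ 2) = v x ^ 2 := by rw [map_mul, map_pow, ha, one_mul]
  rw [add_assoc, v.map_add_eq_of_lt_left, leading]
  rw [leading]
  exact (valuation_linear_le hb hc hx.le).trans_lt (lt_self_pow₀ hx one_lt_two)

lemma valuation_monic_cubic_eq {a b c x : R} (ha : v a ≤ 1) (hb : v b ≤ 1) (hc : v c ≤ 1)
    (hx : 1 < v x) : v (x ^ 3 + a * x ^ 2 + b * x + c) = v x ^ 3 := by
  rw [add_assoc, add_assoc, ← add_assoc (a * x ^ 2), v.map_add_eq_of_lt_left, map_pow]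
  rw [map_pow]
  exact (valuation_quadratic_le ha hb hc hx.le).trans_lt (pow_lt_pow_right₀ hx (by norm_num))

end Valuation

section Doubling

variable {F Γ₀ : Type*} [Field F] [LinearOrderedCommGroupWithZero Γ₀] {v : Valuation F Γ₀}
  {W : WeierstrassCurve.Affine F} [W.IsCharNeTwoNF] {x y : F}

lemma valuation_Y_sq (ha₂ : v W.a₂ ≤ 1) (ha₄ : v W.a₄ ≤ 1) (ha₆ : v W.a₆ ≤ 1)
    (h : W.Equation x y) (hx : 1 < v x) : v y ^ 2 = v x ^ 3 := by
  have equation : y ^ 2 = x ^ 3 + W.a₂ * x ^ 2 + W.a₄ * x + W.a₆ := by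
    simpa using (W.equation_iff x y).1 h
  rw [← map_pow, equation, valuation_monic_cubic_eq ha₂ ha₄ ha₆ hx]

lemma Y_ne_negY_of_isCharNeTwoNF [NeZero (2 : F)] (hy : y ≠ 0) : y ≠ W.negY x y := by
  intro h
  have two_mul_eq_zero : 2 * y = 0 := by
    simp only [WeierstrassCurve.Affine.negY, W.a₁_of_isCharNeTwoNF, W.a₃_of_isCharNeTwoNF] at h
    linear_combination h
  exact mul_ne_zero two_ne_zero hy two_mul_eq_zero

variable [DecidableEq F]

lemma slope_self_mul_of_isCharNeTwoNF (hy : y ≠ W.negY x y) :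
    W.slope x x y y * (2 * y) = 3 * x ^ 2 + 2 * W.a₂ * x + W.a₄ := by
  have sub_negY : y - W.negY x y = 2 * y := by
    simp only [WeierstrassCurve.Affine.negY, W.a₁_of_isCharNeTwoNF, W.a₃_of_isCharNeTwoNF]
    ring
  rw [W.slope_of_Y_ne rfl hy, ← sub_negY, div_mul_cancel₀ _ (sub_ne_zero.2 hy),
    W.a₁_of_isCharNeTwoNF]
  ring

lemma valuation_slope_self_sq_mul (h2 : v 2 < 1) (ha₂ : v W.a₂ ≤ 1) (ha₄ : v W.a₄ ≤ 1)
    (ha₆ : v W.a₆ ≤ 1) (h : W.Equation x y) (hx : 1 < v x) (hy : y ≠ W.negY x y) :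
    v (W.slope x x y y) ^ 2 * v 2 ^ 2 = v x := by
  have h3 : v 3 = 1 := by simpa using valuation_intCast_eq_one_of_odd h2 (n := 3) (by decide)
  have h2a₂ : v (2 * W.a₂) ≤ 1 := by
    rw [map_mul]
    exact mul_le_one' h2.le ha₂
  have slope_mul : v (W.slope x x y y) * (v 2 * v y) = v x ^ 2 := by
    rw [← map_mul, ← map_mul, slope_self_mul_of_isCharNeTwoNF hy,
      valuation_quadratic_eq h3 h2a₂ ha₄ hx]
  have pow_three_ne_zero : v x ^ 3 ≠ 0 := pow_ne_zero 3 (zero_lt_one.trans hx).ne'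
  refine mul_right_cancel₀ pow_three_ne_zero ?_
  calc v (W.slope x x y y) ^ 2 * v 2 ^ 2 * v x ^ 3
      = (v (W.slope x x y y) * (v 2 * v y)) ^ 2 := by
        rw [← valuation_Y_sq ha₂ ha₄ ha₆ h hx, mul_pow, mul_pow, mul_assoc]
    _ = v x * v x ^ 3 := by rw [slope_mul, ← pow_mul, ← pow_succ']

lemma valuation_lt_valuation_addX_slope_self (h2 : v 2 < 1) (ha₂ : v W.a₂ ≤ 1)
    (ha₄ : v W.a₄ ≤ 1) (ha₆ : v W.a₆ ≤ 1) (h : W.Equation x y) (hx : 1 < v x)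
    (hy : y ≠ W.negY x y) : v x < v (W.addX x x (W.slope x x y y)) := by
  set l := W.slope x x y y
  have slope_sq_mul : v l ^ 2 * v 2 ^ 2 = v x :=
    valuation_slope_self_sq_mul h2 ha₂ ha₄ ha₆ h hx hy
  have lt_slope_sq : v x < v (l ^ 2) := by
    have slope_sq_pos : 0 < v l ^ 2 := by
      refine zero_lt_iff.2 fun h0 ↦ (zero_lt_one.trans hx).ne' ?_
      rw [← slope_sq_mul, h0, zero_mul]
    rw [map_pow, ← slope_sq_mul]
    exact mul_lt_of_lt_one_right slope_sq_pos (pow_lt_one₀ zero_le h2 two_ne_zero)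
  have remainder_le : v (2 * x + W.a₂) ≤ v x := valuation_linear_le h2.le ha₂ hx.le
  have addX_eq : W.addX x x l = l ^ 2 - (2 * x + W.a₂) := by
    rw [WeierstrassCurve.Affine.addX, W.a₁_of_isCharNeTwoNF]
    ring
  rwa [addX_eq, v.map_sub_eq_of_lt_left (remainder_le.trans_lt lt_slope_sq)]

end Doubling

/-- The valuation of the `x`-coordinate of a point. For a curve with `v`-integral coefficients,
`1 < xValuation v P` says that `P` is a nonzero point of the kernel of reduction modulo `v`. The
point at infinity gets the junk value `0`, which keeps it out of this condition. -/
def xValuation {F Γ₀ : Type*} [Field F] [LinearOrderedCommGroupWithZero Γ₀] (v : Valuation F Γ₀)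
    {W : WeierstrassCurve.Affine F} : W.Point → Γ₀
  | .zero => 0
  | .some x _ _ => v x

section InfiniteOrder

variable {F Γ₀ : Type*} [Field F] [DecidableEq F] [NeZero (2 : F)]
  [LinearOrderedCommGroupWithZero Γ₀] {v : Valuation F Γ₀}
  {W : WeierstrassCurve.Affine F} [W.IsCharNeTwoNF]

lemma xValuation_lt_xValuation_two_nsmul (h2 : v 2 < 1) (ha₂ : v W.a₂ ≤ 1) (ha₄ : v W.a₄ ≤ 1)
    (ha₆ : v W.a₆ ≤ 1) (P : W.Point) (hP : 1 < xValuation v P) :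
    xValuation v P < xValuation v (2 • P) := by
  match P, hP with
  | .zero, hP => exact absurd hP not_lt_zero
  | .some x y h, hx =>
    have hy : y ≠ 0 := by
      rintro rfl
      have zero_eq : 0 = v x ^ 3 := by simpa using valuation_Y_sq ha₂ ha₄ ha₆ h.1 hx
      exact pow_ne_zero 3 (zero_lt_one.trans hx).ne' zero_eq.symm
    have hy' : y ≠ W.negY x y := Y_ne_negY_of_isCharNeTwoNF hy
    rw [two_nsmul, WeierstrassCurve.Affine.Point.add_self_of_Y_ne hy']
    exact valuation_lt_valuation_addX_slope_self h2 ha₂ ha₄ ha₆ h.1 hx hy'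

theorem not_isOfFinAddOrder_of_one_lt_xValuation (h2 : v 2 < 1) (ha₂ : v W.a₂ ≤ 1)
    (ha₄ : v W.a₄ ≤ 1) (ha₆ : v W.a₆ ≤ 1) {P : W.Point} (hP : 1 < xValuation v P) :
    ¬ IsOfFinAddOrder P :=
  not_isOfFinAddOrder_of_lt_two_nsmul
    (xValuation_lt_xValuation_two_nsmul h2 ha₂ ha₄ ha₆) hP

end InfiniteOrder

theorem six_is_properly_congruent_over_sqrt_five_general {F : Type*} [Field F] [CharZero F]
    [DecidableEq F] (W : WeierstrassCurve.Affine F)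
    (hW : W = { a₁ := 0, a₂ := 12, a₃ := 0, a₄ := -108, a₆ := 0 }) :
    ∃ P : W.Point, ¬ IsOfFinAddOrder P := by
  subst hW
  set W : WeierstrassCurve.Affine F := { a₁ := 0, a₂ := 12, a₃ := 0, a₄ := -108, a₆ := 0 }
  have : W.IsCharNeTwoNF := ⟨rfl, rfl⟩
  obtain ⟨V, h2⟩ := exists_valuationSubring_valuation_algebraMap_lt_one F
    (a := (2 : ℤ)) (by decide)
  rw [map_ofNat] at h2
  have ha₂ : V.valuation W.a₂ ≤ 1 := by simp [W]
  have ha₄ : V.valuation W.a₄ ≤ 1 := by simp [W]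
  have ha₆ : V.valuation W.a₆ ≤ 1 := by simp [W]
  -- The double of `(-2, 16)`.
  have nonsingular : W.Nonsingular (49 / 4) (385 / 8) := by
    rw [W.nonsingular_iff', W.equation_iff]
    norm_num [W]
  have one_lt : 1 < V.valuation (49 / 4) := by
    have h49 : V.valuation 49 = 1 := by
      simpa using valuation_intCast_eq_one_of_odd h2 (n := 49) (by decide)
    have h4 : V.valuation 4 < 1 := by
      rw [show (4 : F) = 2 ^ 2 by norm_num, map_pow]
      exact pow_lt_one₀ zero_le h2 two_ne_zero
    have h4_pos : 0 < V.valuation 4 := V.valuation.pos_iff.2 (by norm_num)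
    rw [map_div₀, h49]
    exact (one_lt_div₀ h4_pos).2 h4
  exact ⟨.some _ _ nonsingular, not_isOfFinAddOrder_of_one_lt_xValuation h2 ha₂ ha₄ ha₆ one_lt⟩

/-- Over `K = ℚ(√5)`, the elliptic curve `E : y² = x³ + 12x² − 108x = x(x+18)(x−6)`
has a point of infinite order; that is, `n = 6` is a properly `(ℚ(√5), π/3)`-congruent number. -/
theorem six_is_properly_congruent_over_sqrt_five
    (W : WeierstrassCurve.Affine ℚ⟮Real.sqrt 5⟯)
    (hW : W = { a₁ := 0, a₂ := 12, a₃ := 0, a₄ := -108, a₆ := 0 }) :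
    ∃ P : W.Point, ¬ IsOfFinAddOrder P :=
  six_is_properly_congruent_over_sqrt_five_general W hW
end
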